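/- Let σ be the ℂ-algebra automorphism of ℂ(X) with σ(X) = X − 2 and let u ∈ ℂ(X) be nonzero. The ℂ-linear operators A_u and B_u on ℂ(X) defined by A_u(b) = σ(b)·u and B_u(b) = −(X/2)·σ⁻¹(b)·σ⁻¹(u)⁻¹ satisfy A_u∘B_u − B_u∘A_u = id, i.e. they define an action of the first Weyl algebra A₁ = ⟨a, b : ab − ba = 1⟩ on ℂ(X). Moreover, the operator −2·B_u∘A_u equals multiplication by X. -/

import Mathlib

/-!
In the skew Laurent algebra, `x` acts by `T b = σ b * u`, which is invertible and `σ`-semilinear: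
`T (p * b) = σ p * T b`. The operators of the theorem are `A = T` and `B = p * T⁻¹` for
`p = -(X / 2)`, so `B ∘ A` is multiplication by `p` and `A ∘ B = T ∘ p ∘ T⁻¹` is multiplication by
`σ p`. The choice of `p` makes `σ p - p = 1`.
-/

section TwistedMulRight

variable {R : Type*} [Semiring R] (σ : R ≃+* R) (u : Rˣ)

/-- The action `b ↦ σ b * u` on `R` of the variable `x` of the skew Laurent ring
`R[x, x⁻¹; σ]`; the inverse equivalence is the action of `x⁻¹`. -/
def twistedMulRight : R ≃+ R :=
  σ.toAddEquiv.trans (AddAut.mulRight u)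

theorem twistedMulRight_apply (b : R) : twistedMulRight σ u b = σ b * u :=
  rfl

theorem twistedMulRight_symm_apply (b : R) :
    (twistedMulRight σ u).symm b = σ.symm b * σ.symm ↑u⁻¹ :=
  map_mul σ.symm b ↑u⁻¹

theorem twistedMulRight_mul (p b : R) :
    twistedMulRight σ u (p * b) = σ p * twistedMulRight σ u b := by
  simp only [twistedMulRight_apply, map_mul, mul_assoc]

theorem twistedMulRight_mul_symm (p b : R) :
    twistedMulRight σ u (p * (twistedMulRight σ u).symm b) = σ p * b := by
  rw [twistedMulRight_mul, AddEquiv.apply_symm_apply]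

end TwistedMulRight

theorem twistedMulRight_weyl_relation {R : Type*} [Ring R] (σ : R ≃+* R) (u : Rˣ) {p : R}
    (hp : σ p = p + 1) (b : R) :
    twistedMulRight σ u (p * (twistedMulRight σ u).symm b) -
      p * (twistedMulRight σ u).symm (twistedMulRight σ u b) = b := by
  rw [twistedMulRight_mul_symm, AddEquiv.symm_apply_apply, hp, add_one_mul, add_sub_cancel_left]

theorem map_neg_half_eq_add_one {D : Type*} [DivisionRing D] [NeZero (2 : D)] (σ : D ≃+* D) {x : D}
    (hx : σ x = x - 2) : σ (-(x / 2)) = -(x / 2) + 1 := by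
  rw [map_neg, map_div₀, map_ofNat, hx, sub_div, div_self two_ne_zero, neg_sub, sub_eq_neg_add]

theorem stmt12_general {D : Type*} [DivisionRing D] [NeZero (2 : D)] (σ : D ≃+* D) {x : D}
    (hσ : σ x = x - 2) {u : D} (hu : u ≠ 0) {A B : D → D} (hA : ∀ b, A b = σ b * u)
    (hB : ∀ b, B b = -(x / 2) * σ.symm b * (σ.symm u)⁻¹) :
    (∀ b, A (B b) - B (A b) = b) ∧ (∀ b, -2 * B (A b) = x * b) := by
  let T := twistedMulRight σ (Units.mk0 u hu)
  have hAT (b : D) : A b = T b := hA b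
  have hBT (b : D) : B b = -(x / 2) * T.symm b := by
    rw [hB, twistedMulRight_symm_apply, Units.val_inv_eq_inv_val, Units.val_mk0, map_inv₀,
      mul_assoc]
  refine ⟨fun b ↦ ?_, fun b ↦ ?_⟩
  · simp only [hAT, hBT]
    exact twistedMulRight_weyl_relation σ _ (map_neg_half_eq_add_one σ hσ) b
  · have two_mul_half : 2 * (x / 2) = x := by rw [two_mul, add_halves]
    rw [hAT, hBT, T.symm_apply_apply, ← mul_assoc, neg_mul_neg, two_mul_half]

/-- Let `σ` be the `ℂ`-algebra automorphism of `ℂ(X)` with `σ(X) = X − 2` and `u ∈ ℂ(X)`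
nonzero.  The operators `A_u(b) = σ(b)·u` and `B_u(b) = −(X/2)·σ⁻¹(b)·σ⁻¹(u)⁻¹` on `ℂ(X)`
satisfy `A_u∘B_u − B_u∘A_u = id` (the defining relation of the first Weyl algebra), and
`−2·B_u∘A_u` is multiplication by `X`. -/
theorem stmt12 (σ : RatFunc ℂ ≃ₐ[ℂ] RatFunc ℂ) (hσ : σ RatFunc.X = RatFunc.X - 2)
    (u : RatFunc ℂ) (hu : u ≠ 0)
    (A B : RatFunc ℂ → RatFunc ℂ)
    (hA : ∀ b, A b = σ b * u)
    (hB : ∀ b, B b = -(RatFunc.X / 2) * σ.symm b * (σ.symm u)⁻¹) :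
    (∀ b, A (B b) - B (A b) = b) ∧
    (∀ b, -2 * B (A b) = RatFunc.X * b) :=
  stmt12_general σ.toRingEquiv hσ hu hA hB
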